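/- Let k be a field, K/k a field extension, and 𝒳 a separated integral scheme of finite type over k equipped with a k-morphism η : Spec K → 𝒳 whose image is the generic point of 𝒳. Let X be the set of valuation subrings O of K with k ⊆ O such that η extends to a k-morphism Spec O → 𝒳 (i.e. O has a center on 𝒳). Then there exists a finitely generated k-subalgebra A ⊆ K with X = {O : O is a valuation subring of K, k ⊆ O, A ⊆ O} if and only if the normalization of 𝒳 admits a proper k-morphism to an affine k-scheme of finite type. -/

import Mathlib

open AlgebraicGeometry CategoryTheory

noncomputable section

/-- `ν : T ⟶ S` is the normalization of the integral scheme `S`: `T` is an integral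
scheme that is normal (all its local rings are integrally closed domains), `ν` is an
integral morphism (affine and universally closed), and `ν` is birational (it sends
the generic point to the generic point and induces an isomorphism on stalks there). -/
def IsNormalization {T S : Scheme}
    [AlgebraicGeometry.IsIntegral T] [AlgebraicGeometry.IsIntegral S]
    (ν : T ⟶ S) : Prop :=
  (∀ x : T.carrier, IsIntegrallyClosed (T.presheaf.stalk x)) ∧
    IsAffineHom ν ∧ UniversallyClosed ν ∧
    ν.base (genericPoint T) = genericPoint S ∧
    IsIso (ν.stalkMap (genericPoint T))

/-! Write `T` for the normalization. Integral closures of finitely generated `k`-domains in finite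
extensions of their fraction fields are finite, so `T` is again separated and of finite type over
`k`. In the inseparable case the usual trace form argument works with a Frobenius-semilinear trace,
corrected to a linear form by a Cartier-linear map of the polynomial ring.

A universally closed morphism lifts centers, so a valuation ring of `K` has a center on `𝒳` if and
only if it has one on `T`, and if and only if it has one on any affine scheme `Spec B` under `T` for
which `T ⟶ Spec B` is proper. On `Spec B` this means containing the image of `B` in `K`.

Conversely, let the valuation rings with a center on `T` be those containing `A`. Then every
element of `A` is integral over each local ring of `T`. As `T` is normal, the minimal polynomial of
such an element over the function field has coefficients in all local rings, that is, in `Γ(T, ⊤)`.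
Finitely many such coefficients generate a `k`-algebra `B` over which `A` is integral. A valuation
ring of `K` with a center on `Spec B` contains `A`, so it has a center on `T`. This is the
valuative criterion for `T ⟶ Spec B`, restricted to valuation rings of `K`. An arbitrary test
`Spec L ⟶ T` at a point `x` with valuation ring `R` of `L` reduces to it: take a valuation ring `V`
of `K` dominating the local ring at `x` and compose it with a valuation of the residue field of `V`
that agrees with `R` on the residue field of `x`.
-/

/-! ### Finiteness of integral closures -/

/-- A Cartier-linear (`q⁻¹`-linear) endomorphism of a ring `P`: an additive map `l` with
`l (a ^ q * b) = a * l b`. Composing it with an additive map that is semilinear along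
`a ↦ a ^ q` gives a linear map. -/
def IsCartierLinear {P : Type*} [CommSemiring P] (q : ℕ) (l : P →+ P) : Prop :=
  ∀ a b, l (a ^ q * b) = a * l b

theorem exists_addMonoidHom_semilinear_of_ne_zero {k F : Type*} [Field k] [Field F] (φ : k →+* F)
    {u : F} (hu : u ≠ 0) : ∃ l : F →+ k, (∀ a b, l (φ a * b) = a * l b) ∧ l u ≠ 0 := by
  algebraize [φ]
  obtain ⟨l, hl⟩ := not_forall.mp (mt (Module.forall_dual_apply_eq_zero_iff k u).mp hu)
  refine ⟨l.toAddMonoidHom, fun a b => ?_, hl⟩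
  exact (congrArg l (Algebra.smul_def a b).symm).trans (l.map_smul a b)

section MvPolynomial

open MvPolynomial

variable {σ R : Type*} [CommSemiring R]

theorem nsmul_le_add_nsmul_iff {q : ℕ} {ρ : σ →₀ ℕ} (hρ : ∀ i, ρ i < q)
    {γ δ : σ →₀ ℕ} : q • γ ≤ ρ + q • δ ↔ γ ≤ δ := by
  refine forall_congr' fun i => ?_
  simp only [Finsupp.smul_apply, Finsupp.add_apply, smul_eq_mul]
  constructor
  · intro h
    have : q * γ i < q * (δ i + 1) := by linarith [hρ i]
    exact Nat.lt_succ_iff.mp (lt_of_mul_lt_mul_left this q.zero_le)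
  · exact fun h => (Nat.mul_le_mul_left q h).trans (Nat.le_add_left _ _)

theorem injective_add_nsmul (ρ : σ →₀ ℕ) {q : ℕ} (hq : q ≠ 0) :
    Function.Injective fun γ : σ →₀ ℕ => ρ + q • γ :=
  (add_right_injective ρ).comp (nsmul_right_injective hq)

/-- The Cartier map of a polynomial ring with digit `ρ`: it keeps the monomials whose exponent
has the form `ρ + q • γ`, turns that exponent into `γ` and applies `l` to the coefficient. -/
def mvPolynomialCartierMap (l : R →+ R) (ρ : σ →₀ ℕ) {q : ℕ} (hq : q ≠ 0) :
    MvPolynomial σ R →+ MvPolynomial σ R :=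
  AddMonoidAlgebra.coeffAddEquiv.symm.toAddMonoidHom.comp <|
    (Finsupp.mapRange.addMonoidHom l).comp <|
      (Finsupp.comapDomain.addMonoidHom (injective_add_nsmul ρ hq)).comp
        AddMonoidAlgebra.coeffAddEquiv.toAddMonoidHom

theorem coeff_mvPolynomialCartierMap (l : R →+ R) (ρ : σ →₀ ℕ) {q : ℕ} (hq : q ≠ 0)
    (f : MvPolynomial σ R) (γ : σ →₀ ℕ) :
    coeff γ (mvPolynomialCartierMap l ρ hq f) = l (coeff (ρ + q • γ) f) := rfl

theorem IsCartierLinear.mvPolynomialCartierMap {p e : ℕ} [ExpChar R p] {l : R →+ R}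
    (hl : IsCartierLinear (p ^ e) l) {ρ : σ →₀ ℕ} (hρ : ∀ i, ρ i < p ^ e)
    (hq : p ^ e ≠ 0) : IsCartierLinear (p ^ e) (mvPolynomialCartierMap l ρ hq) := by
  intro a b
  induction a using MvPolynomial.induction_on' with
  | monomial γ c =>
    ext δ
    rw [coeff_mvPolynomialCartierMap, monomial_pow, coeff_monomial_mul', coeff_monomial_mul',
      coeff_mvPolynomialCartierMap]
    simp only [nsmul_le_add_nsmul_iff hρ]
    split_ifs with h
    · have hsub : ρ + p ^ e • δ - p ^ e • γ = ρ + p ^ e • (δ - γ) := by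
        ext i
        simp only [Finsupp.tsub_apply, Finsupp.add_apply, Finsupp.smul_apply, smul_eq_mul,
          Nat.mul_sub]
        exact Nat.add_sub_assoc (Nat.mul_le_mul_left _ (h i)) _
      rw [hsub, hl]
    · exact map_zero l
  | add a a' ha ha' => rw [add_pow_expChar_pow, add_mul, map_add, ha, ha', add_mul]

theorem exists_isCartierLinear_mvPolynomial {k : Type*} [Field k] (p e : ℕ) [ExpChar k p]
    {u : MvPolynomial σ k} (hu : u ≠ 0) :
    ∃ l : MvPolynomial σ k →+ MvPolynomial σ k, IsCartierLinear (p ^ e) l ∧ l u ≠ 0 := by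
  obtain ⟨α, hα⟩ := MvPolynomial.ne_zero_iff.mp hu
  obtain ⟨l, hl, hlu⟩ := exists_addMonoidHom_semilinear_of_ne_zero (iterateFrobenius k p e) hα
  have hq : 0 < p ^ e := expChar_pow_pos k p e
  let ρ : σ →₀ ℕ := α.mapRange (· % p ^ e) (Nat.zero_mod _)
  let γ : σ →₀ ℕ := α.mapRange (· / p ^ e) (Nat.zero_div _)
  have hργ : ρ + p ^ e • γ = α := by
    ext i
    exact Nat.mod_add_div (α i) (p ^ e)
  have hρ : ∀ i, ρ i < p ^ e := fun i => Nat.mod_lt (α i) hq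
  refine ⟨_, IsCartierLinear.mvPolynomialCartierMap hl hρ hq.ne', ne_zero_iff.mpr ⟨γ, ?_⟩⟩
  rwa [coeff_mvPolynomialCartierMap, hργ]

end MvPolynomial

theorem isNoetherian_of_dual_separates {P C : Type*} [CommRing P] [IsDomain P]
    [IsNoetherianRing P] [AddCommGroup C] [Module P C] (S : Finset C)
    (hS : ∀ c : C, ∃ d : P, d ≠ 0 ∧ d • c ∈ Submodule.span P (S : Set C))
    (hsep : ∀ c : C, c ≠ 0 → ∃ l : Module.Dual P C, l c ≠ 0) : IsNoetherian P C := by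
  let restrict : Module.Dual P C →ₗ[P] (S → P) := LinearMap.pi fun s => LinearMap.applyₗ s.1
  have restrict_injective : Function.Injective restrict := by
    rw [injective_iff_map_eq_zero]
    intro l hl
    have hspan : Submodule.span P (S : Set C) ≤ LinearMap.ker l :=
      Submodule.span_le.mpr fun s hs => congrFun hl ⟨s, hs⟩
    ext c
    obtain ⟨d, hd, hdc⟩ := hS c
    have h : d * l c = 0 := by simpa using hspan hdc
    exact (mul_eq_zero.mp h).resolve_left hd
  have : IsNoetherian P (Module.Dual P C) := isNoetherian_of_injective restrict restrict_injective
  obtain ⟨G, hG⟩ := (inferInstance : Module.Finite P (Module.Dual P C)).fg_top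
  let eval : C →ₗ[P] (G → P) := LinearMap.pi fun g => g.1
  refine isNoetherian_of_injective eval ((injective_iff_map_eq_zero _).mpr fun c hc => ?_)
  by_contra hne
  obtain ⟨l, hl⟩ := hsep c hne
  have hspan : Submodule.span P (G : Set (Module.Dual P C)) ≤ LinearMap.ker (LinearMap.applyₗ c) :=
    Submodule.span_le.mpr fun g hg => congrFun hc ⟨g, hg⟩
  exact hl (hspan (hG ▸ Submodule.mem_top : l ∈ _))

theorem exists_trace_pow_expChar_pow_ne_zero (F E : Type*) [Field F] [Field E] [Algebra F E]
    [FiniteDimensional F E] [Algebra.IsSeparable F E] (p e : ℕ) [ExpChar F p] :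
    ∃ w : E, Algebra.trace F E (w ^ p ^ e) ≠ 0 := by
  by_contra! h
  have hspan := Field.span_map_pow_expChar_pow_eq_top_of_isSeparable (F := F) p e
    (v := (id : E → E)) (by simp)
  have hker : (⊤ : Submodule F E) ≤ LinearMap.ker (Algebra.trace F E) :=
    hspan ▸ Submodule.span_le.mpr (by rintro _ ⟨w, rfl⟩; exact h w)
  obtain ⟨w, hw⟩ := Algebra.trace_surjective F E 1
  exact one_ne_zero (hw.symm.trans (hker (x := w) Submodule.mem_top))

theorem exists_smul_mem_span_integralClosure {P E L : Type*} [CommRing P] [IsDomain P] [Field E]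
    [Field L] [Algebra P E] [IsFractionRing P E] [Algebra E L] [Algebra P L] [IsScalarTower P E L]
    {ι : Type*} [Finite ι] (b : Module.Basis ι E L)
    (hb : ∀ i, _root_.IsIntegral P (b i)) (c : integralClosure P L) :
    ∃ d : P, d ≠ 0 ∧
      d • c ∈ Submodule.span P (Set.range fun i => (⟨b i, hb i⟩ : integralClosure P L)) := by
  classical
  cases nonempty_fintype ι
  obtain ⟨d, hd⟩ := IsLocalization.exist_integer_multiples_of_finite (nonZeroDivisors P)
    fun i => b.repr c i
  choose r hr using hd
  have hdc : (d : P) • c = ∑ i, r i • (⟨b i, hb i⟩ : integralClosure P L) := by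
    apply Subtype.ext
    push_cast
    conv_lhs => rw [← b.sum_repr (c : L), Finset.smul_sum]
    exact Finset.sum_congr rfl fun i _ => by rw [← smul_assoc, ← hr, algebraMap_smul]
  refine ⟨d, nonZeroDivisors.ne_zero d.2, hdc ▸ Submodule.sum_mem _ fun i _ => ?_⟩
  exact Submodule.smul_mem _ _ (Submodule.subset_span ⟨i, rfl⟩)

theorem exists_frobenius_semilinear_trace (P : Type*) {E L : Type*} [CommRing P] [Field E]
    [Field L] [Algebra P E] [Algebra E L] [Algebra P L] [IsScalarTower P E L]
    [FiniteDimensional E L] (p : ℕ) [ExpChar E p] :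
    ∃ (e : ℕ) (τ : L →+ E), (∀ a x, τ (a • x) = a ^ p ^ e * τ x) ∧
      (∀ x, _root_.IsIntegral P x → _root_.IsIntegral P (τ x)) ∧ ∃ w, τ w ≠ 0 := by
  let G := separableClosure E L
  have : ExpChar G p := expChar_of_injective_algebraMap (algebraMap E G).injective p
  have : IsScalarTower P G L := IsScalarTower.of_algebraMap_eq fun x => rfl
  let e := IsPurelyInseparable.exponent G L
  let φ : L →+* G := IsPurelyInseparable.iterateFrobenius G L p le_rfl
  have algebraMap_φ (x : L) : algebraMap G L (φ x) = x ^ p ^ e :=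
    IsPurelyInseparable.algebraMap_iterateFrobenius G p le_rfl x
  have φ_smul (a : E) (x : L) : φ (a • x) = a ^ p ^ e • φ x := by
    apply (algebraMap G L).injective
    rw [algebraMap_φ, Algebra.smul_def, mul_pow, Algebra.smul_def, map_mul, algebraMap_φ,
      ← IsScalarTower.algebraMap_apply E G L, map_pow]
  have isIntegral_φ {x : L} (hx : _root_.IsIntegral P x) : _root_.IsIntegral P (φ x) := by
    rw [← isIntegral_algebraMap_iff (algebraMap G L).injective, algebraMap_φ]
    exact hx.pow _
  obtain ⟨w, hw⟩ := exists_trace_pow_expChar_pow_ne_zero E G p e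
  refine ⟨e, (Algebra.trace E G).toAddMonoidHom.comp φ.toAddMonoidHom, fun a x => ?_,
    fun x hx => Algebra.isIntegral_trace (isIntegral_φ hx), algebraMap G L w, ?_⟩
  · change Algebra.trace E G (φ (a • x)) = _ * Algebra.trace E G (φ x)
    rw [φ_smul, map_smul, smul_eq_mul]
  · change Algebra.trace E G (φ (algebraMap G L w)) ≠ 0
    rwa [IsPurelyInseparable.iterateFrobenius_algebraMap L p le_rfl w]

theorem exists_addMonoidHom_integralClosure_ne_zero (E : Type*) {P L : Type*} [CommRing P]
    [IsDomain P] [IsIntegrallyClosed P] [Field E] [Field L] [Algebra P E] [IsFractionRing P E]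
    [Algebra E L] [Algebra P L] [IsScalarTower P E L] [FiniteDimensional E L] (p : ℕ) [ExpChar P p]
    {c₀ : integralClosure P L} (hc₀ : c₀ ≠ 0) :
    ∃ (e : ℕ) (t : integralClosure P L →+ P), (∀ a c, t (a • c) = a ^ p ^ e * t c) ∧ t c₀ ≠ 0 := by
  have hPE : Function.Injective (algebraMap P E) := IsFractionRing.injective P E
  have : ExpChar E p := expChar_of_injective_algebraMap hPE p
  obtain ⟨e, τ, τ_smul, isIntegral_τ, w, hw⟩ :=
    exists_frobenius_semilinear_trace P (E := E) (L := L) p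
  have : Algebra.IsAlgebraic P L :=
    have := IsLocalization.isAlgebraic (R := P) E (nonZeroDivisors P)
    Algebra.IsAlgebraic.trans P E L
  obtain ⟨y, hy, hz⟩ :=
    (Algebra.IsAlgebraic.isAlgebraic (R := P) ((c₀ : L)⁻¹ * w)).exists_integral_multiple
  set z := y • ((c₀ : L)⁻¹ * w) with z_def
  have τ_mem (c : integralClosure P L) : ∃ r, algebraMap P E r = τ (c * z) :=
    IsIntegrallyClosed.isIntegral_iff.mp (isIntegral_τ _ (c.2.mul hz))
  choose t ht using τ_mem
  have τ_smul' (a : P) (x : L) : τ (a • x) = algebraMap P E (a ^ p ^ e) * τ x := by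
    rw [← algebraMap_smul E a x, τ_smul, map_pow]
  refine ⟨e, AddMonoidHom.mk' t fun c c' => hPE ?_, fun a c => hPE ?_, fun h => ?_⟩
  · rw [map_add, ht, ht, ht, AddMemClass.coe_add, add_mul, map_add]
  · change algebraMap P E (t (a • c)) = algebraMap P E (_ * t c)
    rw [map_mul, ht, ht, ← τ_smul', ← smul_mul_assoc]
    rfl
  · have hc₀' : (c₀ : L) ≠ 0 := fun h => hc₀ (Subtype.ext h)
    have hc₀z : (c₀ : L) * z = y • w := by
      rw [z_def, mul_smul_comm, mul_inv_cancel_left₀ hc₀']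
    have h0 : algebraMap P E (y ^ p ^ e) * τ w = 0 := by
      rw [← τ_smul', ← hc₀z, ← ht]
      exact (congrArg (algebraMap P E) h).trans (map_zero _)
    exact mul_ne_zero ((map_ne_zero_iff _ hPE).mpr (pow_ne_zero _ hy)) hw h0

theorem isNoetherian_integralClosure_of_isCartierLinear (P E L : Type*) [CommRing P] [IsDomain P]
    [IsNoetherianRing P] [IsIntegrallyClosed P] [Field E] [Field L] [Algebra P E]
    [IsFractionRing P E] [Algebra E L] [Algebra P L] [IsScalarTower P E L] [FiniteDimensional E L]
    (p : ℕ) [ExpChar P p]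
    (hP : ∀ (e : ℕ) (u : P), u ≠ 0 → ∃ l : P →+ P, IsCartierLinear (p ^ e) l ∧ l u ≠ 0) :
    IsNoetherian P (integralClosure P L) := by
  classical
  obtain ⟨_, b, hb⟩ := FiniteDimensional.exists_is_basis_integral P E L
  refine isNoetherian_of_dual_separates (Finset.univ.image fun i => ⟨b i, hb i⟩)
    (by simpa using exists_smul_mem_span_integralClosure b hb) fun c hc => ?_
  obtain ⟨e, t, ht, htc⟩ := exists_addMonoidHom_integralClosure_ne_zero E p hc
  obtain ⟨l, hl, hlt⟩ := hP e (t c) htc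
  exact ⟨{ l.comp t with map_smul' := fun a x => (congrArg l (ht a x)).trans (hl a (t x)) }, hlt⟩

theorem finite_integralClosure_of_isNoetherian (P A L : Type*) [CommRing P] [CommRing A]
    [CommRing L] [Algebra P A] [Algebra.IsIntegral P A] [Algebra A L] [Algebra P L]
    [IsScalarTower P A L] [IsNoetherian P (integralClosure P L)] :
    Module.Finite A (integralClosure A L) := by
  let f : integralClosure A L →ₗ[P] integralClosure P L :=
    { toFun := fun x => ⟨x.1, isIntegral_trans (R := P) (A := A) x.1 x.2⟩
      map_add' := fun _ _ => rfl
      map_smul' := fun _ _ => rfl }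
  have hf : Function.Injective f := fun x y h =>
    Subtype.ext (congrArg (fun z : integralClosure P L => (z : L)) h)
  have : IsNoetherian P (integralClosure A L) := isNoetherian_of_injective f hf
  exact Module.Finite.of_restrictScalars_finite P A _

theorem finite_integralClosure_of_finiteType (k A K L : Type*) [Field k] [CommRing A] [IsDomain A]
    [Field K] [Field L] [Algebra k A] [Algebra.FiniteType k A] [Algebra A K] [IsFractionRing A K]
    [Algebra K L] [Algebra A L] [IsScalarTower A K L] [FiniteDimensional K L] :
    Module.Finite A (integralClosure A L) := by
  obtain ⟨n, g, hg, hfin⟩ := exists_finite_inj_algHom_of_fg k A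
  let P := MvPolynomial (Fin n) k
  let _ := g.toRingHom.toAlgebra
  let _ : Algebra P K := ((algebraMap A K).comp g.toRingHom).toAlgebra
  let _ : Algebra P L := ((algebraMap A L).comp g.toRingHom).toAlgebra
  have : IsScalarTower P A K := IsScalarTower.of_algebraMap_eq fun _ => rfl
  have : IsScalarTower P A L := IsScalarTower.of_algebraMap_eq fun _ => rfl
  have : Module.Finite P A := hfin
  have : FaithfulSMul P A := (faithfulSMul_iff_algebraMap_injective P A).mpr hg
  let E := FractionRing P
  have : FaithfulSMul P K := (faithfulSMul_iff_algebraMap_injective P K).mpr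
    ((IsFractionRing.injective A K).comp hg)
  let _ : Algebra E K := FractionRing.liftAlgebra P K
  have : IsScalarTower P E K := FractionRing.isScalarTower_liftAlgebra P K
  have : FiniteDimensional E K :=
    Module.Finite.of_isLocalization P A (Rₚ := E) (Sₚ := K) (nonZeroDivisors P)
  let _ : Algebra E L := ((algebraMap K L).comp (algebraMap E K)).toAlgebra
  have : IsScalarTower E K L := IsScalarTower.of_algebraMap_eq fun _ => rfl
  have : FiniteDimensional E L := Module.Finite.trans K L
  have : IsScalarTower P E L := IsScalarTower.of_algebraMap_eq fun x =>
    (IsScalarTower.algebraMap_apply A K L (g x)).trans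
      (congrArg (algebraMap K L) (IsScalarTower.algebraMap_apply P E K x))
  obtain ⟨p, _⟩ := ExpChar.exists k
  have : IsNoetherian P (integralClosure P L) :=
    isNoetherian_integralClosure_of_isCartierLinear P E L p
      fun e u hu => exists_isCartierLinear_mvPolynomial p e hu
  exact finite_integralClosure_of_isNoetherian P A L

theorem finite_of_isIntegral_of_injective {k A B K L : Type*} [Field k] [CommRing A] [IsDomain A]
    [CommRing B] [Field K] [Field L] [Algebra A K] [IsFractionRing A K] {c : k →+* A}
    (hc : c.FiniteType) {φ : A →+* B} (hφ : φ.IsIntegral) {i : K →+* L} (hi : i.Finite)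
    {j : B →+* L} (hj : Function.Injective j) (h : j.comp φ = i.comp (algebraMap A K)) :
    φ.Finite := by
  algebraize [c, φ, i, i.comp (algebraMap A K)]
  have := finite_integralClosure_of_finiteType k A K L
  have : IsNoetherianRing A := Algebra.FiniteType.isNoetherianRing k A
  let jA : B →ₐ[A] L := AlgHom.mk j fun a => RingHom.congr_fun h a
  let g : B →ₐ[A] integralClosure A L := jA.codRestrict _ fun b => IsIntegral.map jA (hφ b)
  have hg : Function.Injective g.toLinearMap := fun x y hxy => hj (congrArg Subtype.val hxy)
  exact Module.Finite.of_injective g.toLinearMap hg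

universe u

/-! ### Finiteness of the normalization -/

/-- The map of function fields induced by a morphism that hits the generic point. -/
def functionFieldMap {T X : Scheme.{u}} [IrreducibleSpace T] [IrreducibleSpace X] (ν : T ⟶ X)
    (hν : ν (genericPoint T) = genericPoint X) : X.functionField ⟶ T.functionField :=
  X.presheaf.stalkSpecializes (specializes_of_eq hν) ≫ ν.stalkMap (genericPoint T)

theorem app_germToFunctionField {T X : Scheme.{u}} [IrreducibleSpace T] [IrreducibleSpace X]
    (ν : T ⟶ X) (hν : ν (genericPoint T) = genericPoint X) (U : X.Opens) [Nonempty U]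
    [Nonempty (ν ⁻¹ᵁ U)] :
    ν.app U ≫ T.germToFunctionField (ν ⁻¹ᵁ U) =
      X.germToFunctionField U ≫ functionFieldMap ν hν := by
  rw [functionFieldMap, TopCat.Presheaf.germ_stalkSpecializes_assoc]
  exact (ν.germ_stalkMap U (genericPoint T) _).symm

theorem isFinite_of_finite_functionFieldMap {k : Type u} [Field k] {T X : Scheme.{u}}
    [IsIntegral T] [IsIntegral X] (p : X ⟶ Spec (.of k)) [LocallyOfFiniteType p] (ν : T ⟶ X)
    [IsIntegralHom ν] (hν : ν (genericPoint T) = genericPoint X)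
    (hfin : (functionFieldMap ν hν).hom.Finite) : IsFinite ν := by
  refine (isFinite_iff ν).mpr ⟨inferInstance, fun U hU => ?_⟩
  obtain rfl | hU_ne := eq_or_ne U ⊥
  · have : Subsingleton Γ(T, ν ⁻¹ᵁ ⊥) := inferInstanceAs (Subsingleton Γ(T, ⊥))
    exact .of_surjective _ fun y => ⟨0, Subsingleton.elim _ y⟩
  obtain ⟨x, hx⟩ := (TopologicalSpace.Opens.ne_bot_iff_nonempty U).mp hU_ne
  have hgen : ν (genericPoint T) ∈ U := hν ▸ (genericPoint_specializes x).mem_open U.isOpen hx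
  have : Nonempty U := ⟨⟨x, hx⟩⟩
  have : Nonempty (ν ⁻¹ᵁ U) := ⟨⟨_, hgen⟩⟩
  have : IsFractionRing Γ(X, U) X.functionField :=
    functionField_isFractionRing_of_isAffineOpen X U hU
  have hc := p.finiteType_appLE (isAffineOpen_top (Spec (.of k))) hU le_top
  have hc' : ((p.appLE ⊤ U le_top).hom.comp (Scheme.ΓSpecIso (.of k)).inv.hom).FiniteType :=
    hc.comp (.of_surjective _ (ConcreteCategory.bijective_of_isIso _).2)
  refine finite_of_isIntegral_of_injective hc' (ν.isIntegral_app U hU) hfin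
    (T.germToFunctionField_injective (ν ⁻¹ᵁ U)) ?_
  exact congrArg CommRingCat.Hom.hom (app_germToFunctionField ν hν U)

/-! ### Centers of valuation rings -/

section Center

variable {K : Type u} [Field K]

/-- A valuation subring `O` of `K` has a center with respect to a `K`-point `η` of a scheme if `η`
extends to a morphism from `Spec O`. The extension is not required to be compatible with a base,
since this is automatic, see `exists_extension_over_iff_hasCenter`. -/
def HasCenter {X : Scheme.{u}} (η : Spec (.of K) ⟶ X) (O : ValuationSubring K) : Prop :=
  ∃ h : Spec (.of O) ⟶ X, Spec.map (CommRingCat.ofHom O.subtype) ≫ h = η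

theorem isDominant_Spec_map {R S : CommRingCat.{u}} (φ : R ⟶ S)
    (hφ : Function.Injective φ.hom) : IsDominant (Spec.map φ) where
  denseRange := (PrimeSpectrum.denseRange_comap_iff_ker_le_nilRadical φ.hom).mpr <| by
    rw [(RingHom.injective_iff_ker_eq_bot φ.hom).mp hφ]
    exact bot_le

instance (O : ValuationSubring K) : IsDominant (Spec.map (CommRingCat.ofHom O.subtype)) :=
  isDominant_Spec_map _ O.subtype_injective

theorem exists_extension_over_iff_hasCenter {X S : Scheme.{u}} [S.IsSeparated] (p : X ⟶ S)
    {η : Spec (.of K) ⟶ X} {O : ValuationSubring K} {b : Spec (.of O) ⟶ S}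
    (hb : η ≫ p = Spec.map (CommRingCat.ofHom O.subtype) ≫ b) :
    (∃ h : Spec (.of O) ⟶ X, Spec.map (CommRingCat.ofHom O.subtype) ≫ h = η ∧ h ≫ p = b) ↔
      HasCenter η O := by
  refine ⟨fun ⟨h, hη, _⟩ => ⟨h, hη⟩, fun ⟨h, hη⟩ => ⟨h, hη, ?_⟩⟩
  refine ext_of_isDominant (Spec.map (CommRingCat.ofHom O.subtype)) ?_
  rw [reassoc_of% hη, hb]

theorem HasCenter.comp {X Y : Scheme.{u}} {η : Spec (.of K) ⟶ X} {O : ValuationSubring K}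
    (h : HasCenter η O) (f : X ⟶ Y) : HasCenter (η ≫ f) O := by
  obtain ⟨h, hη⟩ := h
  exact ⟨h ≫ f, by rw [reassoc_of% hη]⟩

theorem hasCenter_comp_iff {X Y : Scheme.{u}} (η : Spec (.of K) ⟶ X) (f : X ⟶ Y)
    [UniversallyClosed f] (O : ValuationSubring K) : HasCenter (η ≫ f) O ↔ HasCenter η O := by
  refine ⟨fun ⟨b, hb⟩ => ?_, fun h => h.comp f⟩
  have hf : UniversallyClosed f := inferInstance
  rw [UniversallyClosed.eq_valuativeCriterion] at hf
  obtain ⟨h, hη, -⟩ := (hf.1 { R := O, K := K, i₁ := η, i₂ := b, commSq := ⟨hb.symm⟩ }).exists_lift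
  exact ⟨h, hη⟩

theorem hasCenter_Spec_map_iff {B : CommRingCat.{u}} (β : B ⟶ .of K) (O : ValuationSubring K) :
    HasCenter (Spec.map β) O ↔ ∀ b, β b ∈ O := by
  refine ⟨fun ⟨h, hβ⟩ b => ?_, fun hO => ?_⟩
  · obtain ⟨γ, rfl⟩ := Spec.map_surjective h
    rw [← Spec.map_comp] at hβ
    rw [← Spec.map_injective hβ]
    exact (γ b).2
  · exact ⟨Spec.map (CommRingCat.ofHom (β.hom.codRestrict O.toSubring hO)),
      (Spec.map_comp _ _).symm⟩

end Center

theorem exists_fg_forall_hasCenter_iff {k K : Type u} [Field k] [Field K] [Algebra k K]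
    {T Aff : Scheme.{u}} [IsAffine Aff] (q : Aff ⟶ Spec (.of k)) [LocallyOfFiniteType q]
    (f : T ⟶ Aff) [UniversallyClosed f] (η : Spec (.of K) ⟶ T)
    (hη : η ≫ f ≫ q = Spec.map (CommRingCat.ofHom (algebraMap k K))) :
    ∃ A : Subalgebra k K, A.FG ∧ ∀ O, HasCenter η O ↔ ∀ a ∈ A, a ∈ O := by
  obtain ⟨κ, hκ⟩ := Spec.map_surjective (Aff.isoSpec.inv ≫ q)
  obtain ⟨β, hβ⟩ := Spec.map_surjective (η ≫ f ≫ Aff.isoSpec.hom)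
  have hκ_ft : κ.hom.FiniteType := by
    rw [← HasRingHomProperty.Spec_iff (P := @LocallyOfFiniteType), hκ]
    infer_instance
  have hκβ : κ ≫ β = CommRingCat.ofHom (algebraMap k K) := by
    apply Spec.map_injective
    rw [Spec.map_comp, hβ, hκ, ← hη]
    simp only [Category.assoc, Iso.hom_inv_id_assoc]
  algebraize [κ.hom]
  let βₐ : Γ(Aff, ⊤) →ₐ[k] K := AlgHom.mk β.hom fun x => ConcreteCategory.congr_hom hκβ x
  refine ⟨βₐ.range, ?_, fun O => ?_⟩
  · rw [← Algebra.map_top]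
    exact Algebra.FiniteType.out.map βₐ
  · rw [← hasCenter_comp_iff η (f ≫ Aff.isoSpec.hom), ← hβ, hasCenter_Spec_map_iff]
    exact (Set.forall_mem_range (p := (· ∈ O))).symm

section FieldPoint

variable {K : Type u} [Field K]

/-- The `K`-point of an irreducible scheme at its generic point given by a map from the function
field to `K`. -/
def fieldPoint {T : Scheme.{u}} [IrreducibleSpace T] (ψ : T.functionField ⟶ .of K) :
    Spec (.of K) ⟶ T :=
  Spec.map ψ ≫ T.fromSpecStalk (genericPoint T)

theorem exists_eq_fieldPoint {X : Scheme.{u}} [IrreducibleSpace X] (η : Spec (.of K) ⟶ X)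
    (hη : η (IsLocalRing.closedPoint K) = genericPoint X) :
    ∃ ψ : X.functionField ⟶ .of K, fieldPoint ψ = η := by
  have : IsLocalRing (CommRingCat.of K) := inferInstanceAs (IsLocalRing K)
  have hφ : ∃ φ : X.presheaf.stalk (η (IsLocalRing.closedPoint K)) ⟶ .of K,
      Spec.map φ ≫ X.fromSpecStalk _ = η :=
    ⟨_, Scheme.Spec_stalkClosedPointTo_fromSpecStalk η⟩
  rw [hη] at hφ
  exact hφ

theorem fieldPoint_comp {T X : Scheme.{u}} [IrreducibleSpace T] [IrreducibleSpace X] (ν : T ⟶ X)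
    (hν : ν (genericPoint T) = genericPoint X) (ψ : T.functionField ⟶ .of K) :
    fieldPoint ψ ≫ ν = fieldPoint (functionFieldMap ν hν ≫ ψ) := by
  rw [fieldPoint, fieldPoint, functionFieldMap]
  simp

theorem exists_fieldPoint_comp_eq {T X : Scheme.{u}} [IrreducibleSpace T] [IrreducibleSpace X]
    (ν : T ⟶ X) (hν : ν (genericPoint T) = genericPoint X) [IsIso (functionFieldMap ν hν)]
    (η : Spec (.of K) ⟶ X) (hη : η (IsLocalRing.closedPoint K) = genericPoint X) :
    ∃ ψ : T.functionField ⟶ .of K, fieldPoint ψ ≫ ν = η := by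
  obtain ⟨ψ, rfl⟩ := exists_eq_fieldPoint η hη
  exact ⟨inv (functionFieldMap ν hν) ≫ ψ, by rw [fieldPoint_comp ν hν, IsIso.hom_inv_id_assoc]⟩

theorem isIso_functionFieldMap {T X : Scheme.{u}} [IrreducibleSpace T] [IrreducibleSpace X]
    (ν : T ⟶ X) (hν : ν (genericPoint T) = genericPoint X) [IsIso (ν.stalkMap (genericPoint T))] :
    IsIso (functionFieldMap ν hν) := by
  have : IsIso (X.presheaf.stalkSpecializes (specializes_of_eq hν)) :=
    (X.presheaf.stalkCongr (.of_eq hν)).isIso_inv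
  rw [functionFieldMap]
  infer_instance

end FieldPoint

/-! ### Composite valuations -/

section ValuationSubring

/-- The composite of a valuation ring `V` of `K` with a valuation ring `Q` of the residue field of
`V`: the elements of `V` whose residue class lies in `Q`. -/
def compositeValuationSubring {K : Type*} [Field K] (V : ValuationSubring K)
    (Q : ValuationSubring (IsLocalRing.ResidueField V)) : ValuationSubring K where
  toSubring := (Q.toSubring.comap (IsLocalRing.residue V)).map V.subtype
  mem_or_inv_mem' := by
    have key (y : V) : (y : K) ∈ (Q.toSubring.comap (IsLocalRing.residue V)).map V.subtype ∨
        (y : K)⁻¹ ∈ (Q.toSubring.comap (IsLocalRing.residue V)).map V.subtype := by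
      by_cases hy : IsUnit y
      · obtain ⟨u, rfl⟩ := hy
        refine (Q.mem_or_inv_mem (IsLocalRing.residue V u)).imp (fun h => ⟨u, h, rfl⟩) fun h => ?_
        refine ⟨(u⁻¹ : Vˣ), ?_, map_units_inv V.subtype u⟩
        change IsLocalRing.residue V (u⁻¹ : Vˣ) ∈ Q
        rwa [map_units_inv]
      · refine .inl ⟨y, ?_, rfl⟩
        change IsLocalRing.residue V y ∈ Q
        rw [(IsLocalRing.residue_eq_zero_iff y).mpr hy]
        exact Q.zero_mem
    intro x
    rcases V.mem_or_inv_mem x with hx | hx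
    · exact key ⟨x, hx⟩
    · simpa using (key ⟨x⁻¹, hx⟩).symm

theorem coe_mem_compositeValuationSubring {K : Type*} [Field K] {V : ValuationSubring K}
    {Q : ValuationSubring (IsLocalRing.ResidueField V)} {y : V} :
    (y : K) ∈ compositeValuationSubring V Q ↔ IsLocalRing.residue V y ∈ Q := by
  refine ⟨?_, fun h => ⟨y, h, rfl⟩⟩
  rintro ⟨z, hz, hzy⟩
  rwa [← Subtype.ext hzy]

theorem compositeValuationSubring_le {K : Type*} [Field K] (V : ValuationSubring K)
    (Q : ValuationSubring (IsLocalRing.ResidueField V)) : compositeValuationSubring V Q ≤ V := by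
  rintro _ ⟨y, -, rfl⟩
  exact y.2

theorem exists_valuationSubring_comap_eq {K L : Type*} [Field K] [Field L] (i : K →+* L)
    (R : ValuationSubring K) : ∃ Q : ValuationSubring L, Q.comap i = R := by
  obtain ⟨Q, hQ, _⟩ := IsLocalRing.exists_factor_valuationRing (i.comp R.subtype)
  let iR : R →+* Q := (i.comp R.subtype).codRestrict Q.toSubring hQ
  refine ⟨Q, le_antisymm (fun u (hu : i u ∈ Q) => ?_) fun u hu => hQ ⟨u, hu⟩⟩
  by_contra hu'
  have hu_inv : u⁻¹ ∈ R := (R.mem_or_inv_mem u).resolve_left hu'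
  have hu0 : u ≠ 0 := fun h => hu' (h ▸ R.zero_mem)
  have hunit : IsUnit (iR ⟨u⁻¹, hu_inv⟩) := by
    refine .of_mul_eq_one ⟨i u, hu⟩ (Subtype.ext ?_)
    change i u⁻¹ * i u = 1
    rw [← map_mul, inv_mul_cancel₀ hu0, map_one]
  obtain ⟨w, hw⟩ := (isUnit_of_map_unit iR _ hunit).exists_right_inv
  have hwu : (w : K) = u := by
    simpa using (eq_inv_of_mul_eq_one_right (congrArg Subtype.val hw) : (w : K) = u⁻¹⁻¹)
  exact hu' (hwu ▸ w.2)

theorem exists_valuationSubring_le_and_mem_iff {M K L : Type*} [CommRing M] [IsLocalRing M]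
    [Field K] [Field L] (σ : M →+* K) (ρ : M →+* L) [IsLocalHom ρ] (R : ValuationSubring L) :
    ∃ (V W : ValuationSubring K) (σV : M →+* V), IsLocalHom σV ∧ V.subtype.comp σV = σ ∧
      W ≤ V ∧ ∀ m, σ m ∈ W ↔ ρ m ∈ R := by
  obtain ⟨V, hV, hσV⟩ := IsLocalRing.exists_factor_valuationRing σ
  let σV : M →+* V := σ.codRestrict V.toSubring hV
  have : IsLocalHom σV := hσV
  obtain ⟨Q, hQ⟩ := exists_valuationSubring_comap_eq (IsLocalRing.ResidueField.map σV)
    (R.comap (IsLocalRing.ResidueField.lift ρ))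
  refine ⟨V, compositeValuationSubring V Q, σV, this, rfl, compositeValuationSubring_le V Q,
    fun m => ?_⟩
  change (σV m : K) ∈ compositeValuationSubring V Q ↔ _
  rw [coe_mem_compositeValuationSubring, ← IsLocalRing.ResidueField.map_residue,
    ← ValuationSubring.mem_comap, hQ, ValuationSubring.mem_comap,
    IsLocalRing.ResidueField.lift_residue_apply]

end ValuationSubring

/-! ### Integrality over the ring of global sections -/

section IntegralOverGlobalSections

theorem isIntegral_of_forall_valuationSubring {R K : Type*} [CommRing R] [Field K] [Algebra R K]
    {a : K} (h : ∀ O : ValuationSubring K, (∀ r, algebraMap R K r ∈ O) → a ∈ O) :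
    _root_.IsIntegral R a := by
  have : IsIntegrallyClosedIn (integralClosure R K).toSubring K :=
    inferInstanceAs (IsIntegrallyClosedIn (integralClosure R K) K)
  change a ∈ (integralClosure R K).toSubring
  rw [Subring.eq_iInf_of_isIntegrallyClosedIn (R := (integralClosure R K).toSubring),
    Subring.mem_iInf]
  exact fun ⟨V, hV⟩ => h V fun r => hV (algebraMap_mem (integralClosure R K) r)

theorem exists_germ_eq_of_forall_mem_range_algebraMap {T : Scheme.{u}} [IsIntegral T]
    {y : T.functionField}
    (h : ∀ x : T, y ∈ (algebraMap (T.presheaf.stalk x) T.functionField).range) :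
    ∃ s : Γ(T, ⊤), T.presheaf.germ ⊤ (genericPoint T) trivial s = y := by
  have local_section (x : T) : ∃ (U : T.Opens) (_ : x ∈ U) (hg : genericPoint T ∈ U)
      (s : Γ(T, U)), T.presheaf.germ U (genericPoint T) hg s = y := by
    obtain ⟨z, rfl⟩ := h x
    obtain ⟨U, hU, s, rfl⟩ := T.presheaf.exists_germ_eq z
    refine ⟨U, hU, (genericPoint_specializes x).mem_open U.isOpen hU, s, ?_⟩
    exact (TopCat.Presheaf.germ_stalkSpecializes_apply T.presheaf hU _ s).symm
  choose U hU hg s hs using local_section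
  obtain ⟨t, ht, -⟩ := T.sheaf.existsUnique_gluing' U ⊤ (fun x => homOfLE le_top)
    (fun x _ => TopologicalSpace.Opens.mem_iSup.mpr ⟨x, hU x⟩) s fun x x' => by
      apply germ_injective_of_isIntegral T (genericPoint T) (U := U x ⊓ U x') ⟨hg x, hg x'⟩
      refine (T.presheaf.germ_res_apply _ _ _ _).trans (.trans ?_
        (T.presheaf.germ_res_apply _ _ _ _).symm)
      rw [hs, hs]
  refine ⟨t, ?_⟩
  rw [← hs (genericPoint T), ← ht (genericPoint T)]
  exact (T.presheaf.germ_res_apply _ _ _ _).symm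

theorem isIntegralElem_of_forall_isIntegralElem_stalk {T : Scheme.{u}} [IsIntegral T]
    (hT : ∀ x : T, IsIntegrallyClosed (T.presheaf.stalk x)) {K : Type*} [Field K]
    (ψ : T.functionField →+* K) {a : K}
    (ha : ∀ x : T, (ψ.comp (algebraMap (T.presheaf.stalk x) T.functionField)).IsIntegralElem a) :
    (ψ.comp (T.presheaf.germ ⊤ (genericPoint T) trivial).hom).IsIntegralElem a := by
  algebraize [ψ]
  have coeff_mem (x : T) (n : ℕ) : (minpoly T.functionField a).coeff n ∈
      (algebraMap (T.presheaf.stalk x) T.functionField).range := by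
    let _ := (ψ.comp (algebraMap (T.presheaf.stalk x) T.functionField)).toAlgebra
    have : IsScalarTower (T.presheaf.stalk x) T.functionField K := .of_algebraMap_eq' rfl
    have hx : _root_.IsIntegral (T.presheaf.stalk x) a := ha x
    rw [minpoly.isIntegrallyClosed_eq_field_fractions' T.functionField hx, Polynomial.coeff_map]
    exact ⟨_, rfl⟩
  let g := (T.presheaf.germ ⊤ (genericPoint T) trivial).hom
  have mem_lifts : minpoly T.functionField a ∈ Polynomial.lifts g := by
    rw [Polynomial.lifts_iff_coeff_lifts]
    intro n
    obtain ⟨s, hs⟩ := exists_germ_eq_of_forall_mem_range_algebraMap fun x => coeff_mem x n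
    exact ⟨s, hs⟩
  have ha' : _root_.IsIntegral T.functionField a := by
    obtain ⟨P, P_monic, hP⟩ := ha (genericPoint T)
    let e := (T.presheaf.stalkSpecializes (genericPoint_specializes (genericPoint T))).hom
    exact ⟨P.map e, P_monic.map e, (Polynomial.eval₂_map ..).trans hP⟩
  obtain ⟨P, hP, -, P_monic⟩ :=
    Polynomial.lifts_and_natDegree_eq_and_monic mem_lifts (minpoly.monic ha')
  refine ⟨P, P_monic, ?_⟩
  rw [← Polynomial.eval₂_map]
  change Polynomial.eval₂ _ a (P.map g) = 0
  rw [hP]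
  exact minpoly.aeval T.functionField a

end IntegralOverGlobalSections

/-! ### The valuative criterion over the field `K` -/

section ExistencePart

variable {K : Type u} [Field K] {T : Scheme.{u}}

/-- The map to `K` from the local ring at a point of an irreducible scheme, obtained from a map from
the function field to `K`. -/
def stalkToField [IrreducibleSpace T] (ψ : T.functionField ⟶ .of K) (x : T) :
    T.presheaf.stalk x ⟶ .of K :=
  T.presheaf.stalkSpecializes (genericPoint_specializes x) ≫ ψ

theorem Spec_map_stalkToField_fromSpecStalk [IrreducibleSpace T] (ψ : T.functionField ⟶ .of K)
    (x : T) : Spec.map (stalkToField ψ x) ≫ T.fromSpecStalk x = fieldPoint ψ := by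
  rw [stalkToField, Spec.map_comp, Category.assoc, Scheme.SpecMap_stalkSpecializes_fromSpecStalk,
    fieldPoint]

theorem stalkSpecializes_stalkToField [IrreducibleSpace T] (ψ : T.functionField ⟶ .of K) {x c : T}
    (h : x ⤳ c) : T.presheaf.stalkSpecializes h ≫ stalkToField ψ x = stalkToField ψ c := by
  rw [stalkToField, TopCat.Presheaf.stalkSpecializes_comp_assoc, stalkToField]

theorem stalkToField_mem_of_comp_eq [IrreducibleSpace T] {ψ : T.functionField ⟶ .of K}
    {O : ValuationSubring K} {h : Spec (.of O) ⟶ T}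
    (hψ : Spec.map (CommRingCat.ofHom O.subtype) ≫ h = fieldPoint ψ)
    (s : T.presheaf.stalk (h (IsLocalRing.closedPoint O))) : stalkToField ψ _ s ∈ O := by
  have : IsLocalRing (CommRingCat.of O) := inferInstanceAs (IsLocalRing O)
  let τ : T.presheaf.stalk (h (IsLocalRing.closedPoint O)) ⟶ .of O := Scheme.stalkClosedPointTo h
  have hτ : Spec.map τ ≫ T.fromSpecStalk _ = h := Scheme.Spec_stalkClosedPointTo_fromSpecStalk h
  have hτψ : τ ≫ CommRingCat.ofHom O.subtype = stalkToField ψ _ := by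
    apply Spec.map_injective
    rw [← cancel_mono (T.fromSpecStalk _), Spec_map_stalkToField_fromSpecStalk, Spec.map_comp,
      Category.assoc, hτ, hψ]
  rw [← hτψ]
  exact (τ s).2

theorem hasCenter_fieldPoint_iff [IrreducibleSpace T] (ψ : T.functionField ⟶ .of K)
    (O : ValuationSubring K) :
    HasCenter (fieldPoint ψ) O ↔ ∃ x, ∀ s, stalkToField ψ x s ∈ O := by
  refine ⟨fun ⟨h, hψ⟩ => ⟨_, stalkToField_mem_of_comp_eq hψ⟩, fun ⟨x, hx⟩ => ?_⟩
  obtain ⟨h, hh⟩ := (hasCenter_Spec_map_iff (stalkToField ψ x) O).mpr hx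
  exact ⟨h ≫ T.fromSpecStalk x, by rw [reassoc_of% hh, Spec_map_stalkToField_fromSpecStalk]⟩

theorem isIntegralElem_of_forall_hasCenter_fieldPoint [IsIntegral T]
    (hT : ∀ x : T, IsIntegrallyClosed (T.presheaf.stalk x)) (ψ : T.functionField ⟶ .of K) {a : K}
    (ha : ∀ O, HasCenter (fieldPoint ψ) O → a ∈ O) :
    (T.presheaf.germ ⊤ (genericPoint T) trivial ≫ ψ).hom.IsIntegralElem a := by
  refine isIntegralElem_of_forall_isIntegralElem_stalk hT ψ.hom fun x => ?_
  let _ := (stalkToField ψ x).hom.toAlgebra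
  exact isIntegral_of_forall_valuationSubring (R := T.presheaf.stalk x) fun O hO =>
    ha O ((hasCenter_fieldPoint_iff ψ O).mpr ⟨x, hO⟩)

/-- Separatedness makes the two extensions of `fieldPoint ψ` to `Spec V` agree: the one through the
local ring at `x` and the one through `Spec W`. -/
theorem exists_specializes_forall_stalkToField_mem [IsIntegral T] [T.IsSeparated]
    {ψ : T.functionField ⟶ .of K} {x : T} {V W : ValuationSubring K} (hWV : W ≤ V)
    (σ : T.presheaf.stalk x →+* V) [IsLocalHom σ]
    (hσ : V.subtype.comp σ = (stalkToField ψ x).hom) (hW : HasCenter (fieldPoint ψ) W) :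
    ∃ c, x ⤳ c ∧ ∀ s, stalkToField ψ c s ∈ W := by
  obtain ⟨h, hψ⟩ := hW
  refine ⟨_, ?_, stalkToField_mem_of_comp_eq hψ⟩
  let j : Spec (.of V) ⟶ Spec (.of W) := Spec.map (CommRingCat.ofHom (Subring.inclusion hWV))
  have hj : Spec.map (CommRingCat.ofHom V.subtype) ≫ j =
      Spec.map (CommRingCat.ofHom W.subtype) := (Spec.map_comp _ _).symm
  have extensions_agree : Spec.map (CommRingCat.ofHom σ) ≫ T.fromSpecStalk x = j ≫ h := by
    refine ext_of_isDominant (Spec.map (CommRingCat.ofHom V.subtype)) ?_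
    rw [reassoc_of% hj, hψ, ← Spec_map_stalkToField_fromSpecStalk ψ x, ← Spec.map_comp_assoc,
      ← CommRingCat.ofHom_comp, hσ, CommRingCat.ofHom_hom]
  have hx : (j ≫ h) (IsLocalRing.closedPoint V) = x := by
    rw [← extensions_agree]
    exact (congrArg (T.fromSpecStalk x) (IsLocalRing.comap_closedPoint σ)).trans
      T.fromSpecStalk_closedPoint
  nth_rw 1 [← hx]
  exact (IsLocalRing.specializes_closedPoint (R := W) (j _)).map h.continuous

theorem exists_Spec_map_algebraMap_comp_eq {R L : Type u} [CommRing R] [IsDomain R] [Field L]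
    [Algebra R L] [FaithfulSMul R L] {x c : T} (hxc : x ⤳ c) (ρ : T.presheaf.stalk x ⟶ .of L)
    (hρ : ∀ s, (T.presheaf.stalkSpecializes hxc ≫ ρ) s ∈ (algebraMap R L).range) :
    ∃ l : Spec (.of R) ⟶ T, Spec.map (CommRingCat.ofHom (algebraMap R L)) ≫ l =
      Spec.map ρ ≫ T.fromSpecStalk x := by
  let e := RingEquiv.ofBijective (algebraMap R L).rangeRestrict
    ⟨fun a b hab => FaithfulSMul.algebraMap_injective R L (congrArg Subtype.val hab),
      (algebraMap R L).rangeRestrict_surjective⟩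
  let θ : T.presheaf.stalk c ⟶ .of R := CommRingCat.ofHom
    (e.symm.toRingHom.comp ((T.presheaf.stalkSpecializes hxc ≫ ρ).hom.codRestrict _ hρ))
  have hθ : θ ≫ CommRingCat.ofHom (algebraMap R L) = T.presheaf.stalkSpecializes hxc ≫ ρ := by
    ext s
    exact congrArg Subtype.val (e.apply_symm_apply ⟨_, hρ s⟩)
  refine ⟨Spec.map θ ≫ T.fromSpecStalk c, ?_⟩
  rw [← Spec.map_comp_assoc, hθ, Spec.map_comp, Category.assoc,
    Scheme.SpecMap_stalkSpecializes_fromSpecStalk]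

theorem existence_of_forall_hasCenter [IsIntegral T] [T.IsSeparated] {B : CommRingCat.{u}}
    (f : T ⟶ Spec B) (ψ : T.functionField ⟶ .of K)
    (h : ∀ O, HasCenter (fieldPoint ψ ≫ f) O → HasCenter (fieldPoint ψ) O) :
    ValuativeCriterion.Existence f := by
  rintro ⟨R, L, i₁, i₂, ⟨w⟩⟩
  have : IsLocalRing (CommRingCat.of L) := inferInstanceAs (IsLocalRing L)
  let x : T := i₁ (IsLocalRing.closedPoint L)
  let ρ : T.presheaf.stalk x ⟶ .of L := Scheme.stalkClosedPointTo i₁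
  have hρ : Spec.map ρ ≫ T.fromSpecStalk x = i₁ := Scheme.Spec_stalkClosedPointTo_fromSpecStalk i₁
  have : IsLocalHom (S := L) ρ.hom :=
    inferInstanceAs (IsLocalHom (Scheme.stalkClosedPointTo i₁).hom)
  obtain ⟨V, W, σ, _, hσ, hWV, hW⟩ := exists_valuationSubring_le_and_mem_iff (L := L)
    (stalkToField ψ x).hom ρ.hom (ValuationRing.valuation R L).valuationSubring
  replace hW (s) : stalkToField ψ x s ∈ W ↔ ρ s ∈ (algebraMap R L).range :=
    (hW s).trans (ValuationRing.mem_integer_iff R L _)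
  have W_hasCenter : HasCenter (fieldPoint ψ ≫ f) W := by
    obtain ⟨δ, hδ⟩ := Spec.map_surjective (T.fromSpecStalk x ≫ f)
    obtain ⟨β, rfl⟩ := Spec.map_surjective i₂
    have hδρ : δ ≫ ρ = β ≫ CommRingCat.ofHom (algebraMap R L) := by
      apply Spec.map_injective
      rw [Spec.map_comp, hδ, reassoc_of% hρ, w, Spec.map_comp]
    rw [← Spec_map_stalkToField_fromSpecStalk ψ x, Category.assoc, ← hδ, ← Spec.map_comp,
      hasCenter_Spec_map_iff]
    exact fun b => (hW (δ b)).mpr ⟨β b, (ConcreteCategory.congr_hom hδρ b).symm⟩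
  obtain ⟨c, hxc, hc⟩ := exists_specializes_forall_stalkToField_mem hWV σ hσ (h W W_hasCenter)
  obtain ⟨l, hl⟩ := exists_Spec_map_algebraMap_comp_eq (R := R) hxc ρ fun s => by
    rw [← stalkSpecializes_stalkToField ψ hxc] at hc
    exact (hW _).mp (hc s)
  rw [hρ] at hl
  have := isDominant_Spec_map (CommRingCat.ofHom (algebraMap R L)) (IsFractionRing.injective R L)
  refine ⟨⟨l, hl, ext_of_isDominant (Spec.map (CommRingCat.ofHom (algebraMap R L))) ?_⟩⟩
  rw [reassoc_of% hl, w]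

end ExistencePart

/-! ### Proper morphisms to affine schemes -/

theorem exists_fg_forall_isIntegralElem {k G K : Type*} [CommRing k] [CommRing G] [CommRing K]
    [Algebra k G] [Algebra k K] (γ : G →ₐ[k] K) {A : Subalgebra k K} (hA : A.FG)
    (h : ∀ a ∈ A, γ.toRingHom.IsIntegralElem a) :
    ∃ S : Subalgebra k G, S.FG ∧ ∀ a ∈ A, (γ.comp S.val).toRingHom.IsIntegralElem a := by
  classical
  obtain ⟨s, rfl⟩ := hA
  choose P P_monic hP using fun a : s => h a (Algebra.subset_adjoin a.2)
  let S := Algebra.adjoin k (Finset.univ.biUnion fun a => (P a).coeffs : Set G)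
  let _ := (γ.comp S.val).toRingHom.toAlgebra
  have : IsScalarTower k S K := .of_algebraMap_eq fun x => ((γ.comp S.val).commutes x).symm
  suffices Algebra.adjoin k (s : Set K) ≤ (integralClosure S K).restrictScalars k from
    ⟨S, ⟨_, rfl⟩, this⟩
  refine Algebra.adjoin_le fun a ha => ?_
  have hS : ((P ⟨a, ha⟩).coeffs : Set G) ⊆ S.toSubring := fun c hc =>
    Algebra.subset_adjoin (Finset.mem_coe.mpr (Finset.mem_biUnion.mpr ⟨_, Finset.mem_univ _, hc⟩))
  refine ⟨(P ⟨a, ha⟩).toSubring S.toSubring hS, (Polynomial.monic_toSubring ..).mpr (P_monic _), ?_⟩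
  have := hP ⟨a, ha⟩
  rwa [← Polynomial.map_toSubring (P ⟨a, ha⟩) S.toSubring hS, Polynomial.eval₂_map] at this

theorem mem_valuationSubring_of_isIntegralElem {R K : Type*} [CommRing R] [Field K] {φ : R →+* K}
    {O : ValuationSubring K} (hO : ∀ r, φ r ∈ O) {a : K} (ha : φ.IsIntegralElem a) : a ∈ O := by
  obtain ⟨P, P_monic, hP⟩ := ha
  have ha' : _root_.IsIntegral O a := by
    refine ⟨P.map (φ.codRestrict O.toSubring hO), P_monic.map _, ?_⟩
    exact (Polynomial.eval₂_map ..).trans hP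
  obtain ⟨y, rfl⟩ := IsIntegrallyClosed.isIntegral_iff.mp ha'
  exact y.2

theorem exists_toSpecΓ_comp_Spec_map_eq {T : Scheme.{u}} {B : CommRingCat.{u}} (t : T ⟶ Spec B) :
    ∃ κ : B ⟶ Γ(T, ⊤), T.toSpecΓ ≫ Spec.map κ = t := by
  refine ⟨(Scheme.ΓSpecIso B).inv ≫ t.appTop, ?_⟩
  rw [Spec.map_comp, ← Scheme.toSpecΓ_naturality_assoc, toSpecΓ_SpecMap_ΓSpecIso_inv,
    Category.comp_id]

section ValuationsWithCenter

variable {k K : Type u} [Field k] [Field K] [Algebra k K]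

theorem exists_isProper_of_forall_hasCenter_iff {T : Scheme.{u}} [IsIntegral T]
    (hT : ∀ x : T, IsIntegrallyClosed (T.presheaf.stalk x)) (t : T ⟶ Spec (.of k)) [IsSeparated t]
    [LocallyOfFiniteType t] [QuasiCompact t] (ψ : T.functionField ⟶ .of K)
    (hψ : fieldPoint ψ ≫ t = Spec.map (CommRingCat.ofHom (algebraMap k K))) {A : Subalgebra k K}
    (hA : A.FG) (h : ∀ O, HasCenter (fieldPoint ψ) O ↔ ∀ a ∈ A, a ∈ O) :
    ∃ (Aff : Scheme.{u}) (q : Aff ⟶ Spec (.of k)) (f : T ⟶ Aff), IsAffine Aff ∧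
      LocallyOfFiniteType q ∧ QuasiCompact q ∧ IsProper f ∧ f ≫ q = t := by
  obtain ⟨κ, hκ⟩ := exists_toSpecΓ_comp_Spec_map_eq t
  let γ : Γ(T, ⊤) ⟶ .of K := T.presheaf.germ ⊤ (genericPoint T) trivial ≫ ψ
  have hγ : fieldPoint ψ ≫ T.toSpecΓ = Spec.map γ := by
    rw [fieldPoint, Category.assoc, Scheme.fromSpecStalk_toSpecΓ, Spec.map_comp]
  have hκγ : κ ≫ γ = CommRingCat.ofHom (algebraMap k K) := by
    apply Spec.map_injective
    rw [← hψ, ← hκ, reassoc_of% hγ, Spec.map_comp]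
  algebraize [κ.hom]
  let γₐ : Γ(T, ⊤) →ₐ[k] K := AlgHom.mk γ.hom fun x => ConcreteCategory.congr_hom hκγ x
  obtain ⟨S, hS, hSA⟩ := exists_fg_forall_isIntegralElem γₐ hA fun a ha =>
    isIntegralElem_of_forall_hasCenter_fieldPoint hT ψ fun O hO => (h O).mp hO a ha
  let ι : CommRingCat.of S ⟶ Γ(T, ⊤) := CommRingCat.ofHom S.val.toRingHom
  let f : T ⟶ Spec (.of S) := T.toSpecΓ ≫ Spec.map ι
  let q : Spec (.of S) ⟶ Spec (.of k) := Spec.map (CommRingCat.ofHom (algebraMap k S))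
  obtain rfl : f ≫ q = t := by
    rw [← hκ, Category.assoc, ← Spec.map_comp]
    rfl
  have hq : LocallyOfFiniteType q := by
    have : Algebra.FiniteType k S := S.fg_iff_finiteType.mp hS
    exact (HasRingHomProperty.Spec_iff (P := @LocallyOfFiniteType)).mpr
      (RingHom.finiteType_algebraMap.mpr this)
  have := IsSeparated.of_comp f q
  have : T.IsSeparated := ⟨by rw [← Limits.terminal.comp_from f]; infer_instance⟩
  have f_existence : ValuativeCriterion.Existence f := by
    refine existence_of_forall_hasCenter f ψ fun O hO => (h O).mpr fun a ha => ?_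
    rw [reassoc_of% hγ, ← Spec.map_comp, hasCenter_Spec_map_iff] at hO
    exact mem_valuationSubring_of_isIntegralElem hO (hSA a ha)
  have := locallyOfFiniteType_of_comp f q
  have := QuasiCompact.of_comp f q
  have := UniversallyClosed.of_valuativeCriterion f f_existence
  exact ⟨_, q, f, inferInstance, hq, inferInstance, {}, rfl⟩

theorem exists_fg_forall_hasCenter_iff_exists_isProper {T : Scheme.{u}} [IsIntegral T]
    (hT : ∀ x : T, IsIntegrallyClosed (T.presheaf.stalk x)) (t : T ⟶ Spec (.of k)) [IsSeparated t]
    [LocallyOfFiniteType t] [QuasiCompact t] (ψ : T.functionField ⟶ .of K)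
    (hψ : fieldPoint ψ ≫ t = Spec.map (CommRingCat.ofHom (algebraMap k K))) :
    (∃ A : Subalgebra k K, A.FG ∧ ∀ O, HasCenter (fieldPoint ψ) O ↔ ∀ a ∈ A, a ∈ O) ↔
      ∃ (Aff : Scheme.{u}) (q : Aff ⟶ Spec (.of k)) (f : T ⟶ Aff), IsAffine Aff ∧
        LocallyOfFiniteType q ∧ QuasiCompact q ∧ IsProper f ∧ f ≫ q = t := by
  constructor
  · rintro ⟨A, hA, h⟩
    exact exists_isProper_of_forall_hasCenter_iff hT t ψ hψ hA h
  · rintro ⟨Aff, q, f, _, _, _, _, rfl⟩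
    exact exists_fg_forall_hasCenter_iff q f (fieldPoint ψ) hψ

theorem forall_exists_extension_over_iff {X : Scheme.{u}} (p : X ⟶ Spec (.of k))
    (η : Spec (.of K) ⟶ X) (hη : η ≫ p = Spec.map (CommRingCat.ofHom (algebraMap k K)))
    (A : Subalgebra k K) :
    (∀ O : ValuationSubring K, ∀ hkO : ∀ x : k, algebraMap k K x ∈ O,
      ((∃ h : Spec (.of O) ⟶ X, Spec.map (CommRingCat.ofHom O.subtype) ≫ h = η ∧
          h ≫ p = Spec.map (CommRingCat.ofHom
            ((algebraMap k K).codRestrict O.toSubring hkO : k →+* O))) ↔ ∀ a ∈ A, a ∈ O)) ↔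
      ∀ O, HasCenter η O ↔ ∀ a ∈ A, a ∈ O := by
  have extension_iff (O : ValuationSubring K) (hkO : ∀ x, algebraMap k K x ∈ O) :=
    exists_extension_over_iff_hasCenter p (η := η) (O := O)
      (b := Spec.map (CommRingCat.ofHom ((algebraMap k K).codRestrict O.toSubring hkO)))
      (by rw [hη, ← Spec.map_comp, ← CommRingCat.ofHom_comp]; rfl)
  have base_le {O : ValuationSubring K} (hO : HasCenter η O) : ∀ x, algebraMap k K x ∈ O := by
    have := hO.comp p
    rwa [hη, hasCenter_Spec_map_iff] at this
  refine ⟨fun h O => ⟨fun hO => ?_, fun hO => ?_⟩, fun h O hkO => (extension_iff O hkO).trans (h O)⟩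
  · exact (h O (base_le hO)).mp ((extension_iff O _).mpr hO)
  · have hkO := fun x => hO _ (A.algebraMap_mem x)
    exact (extension_iff O hkO).mp ((h O hkO).mpr hO)

end ValuationsWithCenter

/-- Let `k` be a field, `K/k` a field extension, and `𝒳` a separated
integral scheme of finite type over `k` equipped with a `k`-morphism
`η : Spec K → 𝒳` hitting the generic point of `𝒳`.  Let `X` be the set of valuation
subrings `O` of `K` with `k ⊆ O` such that `η` extends to a `k`-morphism
`Spec O → 𝒳`.  Then `X = {O : A ⊆ O}` for some finitely generated `k`-subalgebra
`A ⊆ K` if and only if the normalization of `𝒳` admits a proper `k`-morphism to an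
affine `k`-scheme of finite type. -/
theorem affine_birational_space_iff_normalization_semiaffine
    (k K : Type) [Field k] [Field K] [Algebra k K]
    (𝒳 : Scheme) [AlgebraicGeometry.IsIntegral 𝒳]
    (p : 𝒳 ⟶ Spec (CommRingCat.of k))
    [IsSeparated p] [LocallyOfFiniteType p] [QuasiCompact p]
    (η : Spec (CommRingCat.of K) ⟶ 𝒳)
    (hηk : η ≫ p = Spec.map (CommRingCat.ofHom (algebraMap k K)))
    (hηgen : ∀ x : (Spec (CommRingCat.of K)).carrier, η.base x = genericPoint 𝒳)
    (T : Scheme) [AlgebraicGeometry.IsIntegral T]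
    (ν : T ⟶ 𝒳) (hν : IsNormalization ν) :
    (∃ A : Subalgebra k K, A.FG ∧
      ∀ O : ValuationSubring K, ∀ hkO : ∀ x : k, algebraMap k K x ∈ O,
        ((∃ h : Spec (CommRingCat.of O) ⟶ 𝒳,
            Spec.map (CommRingCat.ofHom O.subtype) ≫ h = η ∧
            h ≫ p = Spec.map (CommRingCat.ofHom
              (RingHom.codRestrict (algebraMap k K) O.toSubring hkO : k →+* O)))
          ↔ ∀ a ∈ A, a ∈ O))
    ↔ (∃ (Aff : Scheme) (q : Aff ⟶ Spec (CommRingCat.of k)) (f : T ⟶ Aff),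
        IsAffine Aff ∧ LocallyOfFiniteType q ∧ QuasiCompact q ∧
        IsProper f ∧ f ≫ q = ν ≫ p) := by
  obtain ⟨hT, _, _, hgen, _⟩ := hν
  have : IsIntegralHom ν := IsIntegralHom.iff_universallyClosed_and_isAffineHom.mpr ⟨‹_›, ‹_›⟩
  have := isIso_functionFieldMap ν hgen
  have : IsFinite ν := isFinite_of_finite_functionFieldMap p ν hgen
    (.of_surjective _ (ConcreteCategory.bijective_of_isIso (functionFieldMap ν hgen)).surjective)
  obtain ⟨ψ, rfl⟩ := exists_fieldPoint_comp_eq ν hgen η (hηgen _)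
  simp only [forall_exists_extension_over_iff p _ hηk, hasCenter_comp_iff (fieldPoint ψ) ν]
  rw [Category.assoc] at hηk
  exact exists_fg_forall_hasCenter_iff_exists_isProper hT (ν ≫ p) ψ hηk

end
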